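/- Let ν ∈ ℂ \ (−ℕ₀), μ ∈ ℂ, k ∈ ℕ₀ with ν + k ∉ −ℕ₀, μ + k + 1 ∉ −ℕ₀, and let ρ ∈ ℝ with 0 < ρ < 1. Then ₂F₁(ν+k, ν−μ; μ+k+1; ρ²) = ( Γ(μ+k+1) e^{iπ(μ−ν+1/2)} ) / ( √π Γ(ν+k) ρ^{μ+k+1/2} (1−ρ²)^{ν−μ−1/2} ) · Q_{k+μ−1/2}^{ν−μ−1/2}((1+ρ²)/(2ρ)). -/

import Mathlib

open Complex

/-- Pochhammer symbol (rising factorial) `(a)_k = a (a+1) ⋯ (a+k-1)`. -/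
noncomputable def poch (a : ℂ) (k : ℕ) : ℂ := ∏ i ∈ Finset.range k, (a + (i : ℂ))

/-- Gauss hypergeometric function `₂F₁(a,b;c;w)` as a series. -/
noncomputable def hyp2F1 (a b c w : ℂ) : ℂ :=
  ∑' k : ℕ, poch a k * poch b k / (poch c k * (Nat.factorial k : ℂ)) * w ^ k

/-- Terminating generalized hypergeometric function `₃F₂(-m,a₂,a₃;b₁,b₂;1)`. -/
noncomputable def hyp3F2 (m : ℕ) (a2 a3 b1 b2 : ℂ) : ℂ :=
  ∑ j ∈ Finset.range (m + 1),
    poch (-(m : ℂ)) j * poch a2 j * poch a3 j /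
      (poch b1 j * poch b2 j * (Nat.factorial j : ℂ))

/-- Gegenbauer polynomial `C_n^μ(x)`. -/
noncomputable def gegenbauerC (n : ℕ) (μ : ℂ) (x : ℂ) : ℂ :=
  poch (2 * μ) n / (Nat.factorial n : ℂ) *
    ∑ j ∈ Finset.range (n + 1),
      poch (-(n : ℂ)) j * poch ((n : ℂ) + 2 * μ) j /
          (poch (μ + 1 / 2) j * (Nat.factorial j : ℂ)) * ((1 - x) / 2) ^ j

/-- Associated Legendre function of the second kind `Q_ν^μ(z)` (principal branches). -/
noncomputable def legendreQ (ν μ z : ℂ) : ℂ :=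
  (Real.sqrt Real.pi : ℂ) * Complex.exp (Real.pi * I * μ) * Complex.Gamma (ν + μ + 1) *
      (z ^ 2 - 1) ^ (μ / 2) /
      ((2 : ℂ) ^ (ν + 1) * Complex.Gamma (ν + 3 / 2) * z ^ (ν + μ + 1)) *
    hyp2F1 ((ν + μ + 2) / 2) ((ν + μ + 1) / 2) (ν + 3 / 2) (1 / z ^ 2)

/-- Legendre polynomial `P_n(x)`. -/
noncomputable def legendrePoly (n : ℕ) (x : ℂ) : ℂ :=
  ∑ j ∈ Finset.range (n + 1),
    poch (-(n : ℂ)) j * poch ((n : ℂ) + 1) j / (poch 1 j * (Nat.factorial j : ℂ)) *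
      ((1 - x) / 2) ^ j

/-- Chebyshev polynomial of the second kind `U_n(x)`. -/
noncomputable def chebyshevU (n : ℕ) (x : ℂ) : ℂ :=
  ((n : ℂ) + 1) *
    ∑ j ∈ Finset.range (n + 1),
      poch (-(n : ℂ)) j * poch ((n : ℂ) + 2) j / (poch (3 / 2) j * (Nat.factorial j : ℂ)) *
        ((1 - x) / 2) ^ j

/-!
The quadratic transformation
`₂F₁(a, b; a - b + 1; w) = (1 + w)⁻ᵃ ₂F₁(a / 2, (a + 1) / 2; a - b + 1; 4 w / (1 + w) ^ 2)`
turns the left-hand side, at `w = ρ ^ 2`, into the series that defines `Q` at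
`z = (1 + ρ ^ 2) / (2 ρ)`, since there `4 w / (1 + w) ^ 2 = 1 / z ^ 2`; moreover
`z ^ 2 - 1 = ((1 - ρ ^ 2) / (2 ρ)) ^ 2`, and all bases of powers lie in the right half-plane, where
principal powers are multiplicative. For small `w` the transformation follows by expanding the
powers of `1 + w` into binomial series and summing the resulting double series along diagonals,
each of which is a Chu–Vandermonde sum. The identity theorem extends it to `quadDomain`.
-/

open Finset Topology

section Multichoose

lemma ascPochhammer_eval_eq_prod_range {R : Type*} [CommSemiring R] (r : R) (n : ℕ) :
    (ascPochhammer R n).eval r = ∏ i ∈ range n, (r + i) := by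
  induction n with
  | zero => simp
  | succ n ih => rw [ascPochhammer_succ_eval, ih, prod_range_succ]

lemma factorial_mul_multichoose {R : Type*} [CommRing R] [BinomialRing R] (r : R) (n : ℕ) :
    n.factorial * Ring.multichoose r n = ∏ i ∈ range n, (r + i) := by
  rw [← nsmul_eq_mul, Ring.factorial_nsmul_multichoose_eq_ascPochhammer,
    Polynomial.ascPochhammer_smeval_eq_eval, ascPochhammer_eval_eq_prod_range]

lemma add_multichoose_eq {R : Type*} [CommRing R] [BinomialRing R] (r s : R) (n : ℕ) :
    Ring.multichoose (r + s) n =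
      ∑ p ∈ antidiagonal n, Ring.multichoose r p.1 * Ring.multichoose s p.2 := by
  have multichoose_eq (t : R) (k : ℕ) :
      Ring.multichoose t k = (-1) ^ k * Ring.choose (-t) k := by
    rw [Ring.choose_neg', Units.smul_def, Int.coe_negOnePow_natCast, zsmul_eq_mul, ← mul_assoc]
    push_cast
    rw [← mul_pow, neg_one_mul, neg_neg, one_pow, one_mul]
  rw [multichoose_eq, neg_add, Ring.add_choose_eq n (Commute.all _ _), mul_sum]
  refine sum_congr rfl fun p hp ↦ ?_
  rw [multichoose_eq, multichoose_eq, ← mem_antidiagonal.mp hp, pow_add]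
  ring

lemma norm_multichoose_le {a : ℂ} {s : ℝ} (h : ‖a‖ ≤ s) (n : ℕ) :
    ‖Ring.multichoose a n‖ ≤ Ring.multichoose s n := by
  refine le_of_mul_le_mul_left ?_ (Nat.cast_pos.mpr n.factorial_pos : (0 : ℝ) < n.factorial)
  calc n.factorial * ‖Ring.multichoose a n‖ = ∏ i ∈ range n, ‖a + i‖ := by
        rw [← norm_prod, ← factorial_mul_multichoose, norm_mul, Complex.norm_natCast]
    _ ≤ ∏ i ∈ range n, (s + i) := by
        gcongr with i
        exact (norm_add_le _ _).trans (by simpa using h)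
    _ = n.factorial * Ring.multichoose s n := (factorial_mul_multichoose s n).symm

lemma hasSum_multichoose_mul_pow (s : ℂ) {x : ℂ} (hx : ‖x‖ < 1) :
    HasSum (fun n ↦ Ring.multichoose s n * x ^ n) (1 / (1 - x) ^ s) := by
  have h := (one_div_one_sub_cpow_hasFPowerSeriesOnBall_zero s).hasSum (y := x) (by
    simpa [← ofReal_norm] using hx)
  simpa [FormalMultilinearSeries.ofScalars_apply_eq, Ring.multichoose_eq, mul_comm] using h

lemma tsum_norm_multichoose_mul_pow_le {a x : ℂ} {s : ℝ} (ha : ‖a‖ ≤ s) (hx : ‖x‖ < 1) :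
    ∑' n, ‖Ring.multichoose a n * x ^ n‖ ≤ 1 / (1 - ‖x‖) ^ s := by
  have h := (Real.one_div_one_sub_rpow_hasFPowerSeriesOnBall_zero s).hasSum (y := ‖x‖) (by
    simpa [← ofReal_norm] using hx)
  have h' : HasSum (fun n ↦ Ring.multichoose s n * ‖x‖ ^ n) (1 / (1 - ‖x‖) ^ s) := by
    simpa [FormalMultilinearSeries.ofScalars_apply_eq, Ring.multichoose_eq, mul_comm] using h
  rw [← h'.tsum_eq]
  refine (hasSum_multichoose_mul_pow a hx).summable.norm.tsum_le_tsum (fun n ↦ ?_) h'.summable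
  rw [norm_mul, norm_pow]
  gcongr
  exact norm_multichoose_le ha n

end Multichoose

section Pochhammer

lemma poch_succ (a : ℂ) (n : ℕ) : poch a (n + 1) = poch a n * (a + n) :=
  prod_range_succ _ n

lemma poch_add (a : ℂ) (m n : ℕ) : poch a (m + n) = poch a m * poch (a + m) n := by
  simp only [poch, prod_range_add, Nat.cast_add, add_assoc]

lemma poch_two_mul (a : ℂ) (n : ℕ) :
    poch a (2 * n) = 4 ^ n * (poch (a / 2) n * poch ((a + 1) / 2) n) := by
  induction n with
  | zero => simp [poch]
  | succ n ih =>
    rw [show 2 * (n + 1) = 2 * n + 1 + 1 by ring, poch_succ, poch_succ, ih, poch_succ, poch_succ]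
    push_cast
    ring

lemma poch_ne_zero {c : ℂ} (hc : ∀ m : ℕ, c ≠ -(m : ℂ)) (n : ℕ) : poch c n ≠ 0 :=
  prod_ne_zero_iff.mpr fun i _ h ↦ hc i (eq_neg_of_add_eq_zero_left h)

lemma poch_one_sub_sub (a : ℂ) (n : ℕ) : poch (1 - a - n) n = (-1) ^ n * poch a n := by
  induction n generalizing a with
  | zero => simp [poch]
  | succ n ih =>
    rw [poch_succ, add_comm n, poch_add a 1 n, pow_add,
      show 1 - a - ((1 + n : ℕ) : ℂ) = 1 - (a + 1) - n by push_cast; ring, ih]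
    simp only [poch, prod_range_one]
    push_cast
    ring

lemma multichoose_eq_poch_div (a : ℂ) (n : ℕ) : Ring.multichoose a n = poch a n / n.factorial :=
  eq_div_of_mul_eq (mod_cast n.factorial_ne_zero)
    ((mul_comm _ _).trans (factorial_mul_multichoose a n))

end Pochhammer

section Hypergeometric

/-- The coefficient of `w ^ n` in the Gauss hypergeometric series `₂F₁(a, b; c; w)`. -/
noncomputable def hypCoeff (a b c : ℂ) (n : ℕ) : ℂ :=
  poch a n * poch b n / (poch c n * (n.factorial : ℂ))

lemma hyp2F1_eq_tsum (a b c w : ℂ) : hyp2F1 a b c w = ∑' n, hypCoeff a b c n * w ^ n := rfl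

lemma hyp2F1_comm (a b c : ℂ) : hyp2F1 a b c = hyp2F1 b a c := by
  funext w
  simp only [hyp2F1, mul_comm (poch a _)]

lemma ordinaryHypergeometricSeries_apply_eq_hypCoeff (a b c w : ℂ) (n : ℕ) :
    (ordinaryHypergeometricSeries ℂ a b c n fun _ ↦ w) = hypCoeff a b c n * w ^ n := by
  rw [ordinaryHypergeometricSeries_apply_eq, hypCoeff, smul_eq_mul]
  simp only [ascPochhammer_eval_eq_prod_range, poch]
  ring

lemma one_le_radius_ordinaryHypergeometricSeries (a b : ℂ) {c : ℂ}
    (hc : ∀ m : ℕ, c ≠ -(m : ℂ)) : 1 ≤ (ordinaryHypergeometricSeries ℂ a b c).radius := by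
  by_cases ha : ∃ k : ℕ, a = -(k : ℂ)
  · obtain ⟨k, rfl⟩ := ha
    simp [ordinaryHypergeometric_radius_top_of_neg_nat₁]
  by_cases hb : ∃ k : ℕ, b = -(k : ℂ)
  · obtain ⟨k, rfl⟩ := hb
    simp [ordinaryHypergeometric_radius_top_of_neg_nat₂]
  push Not at ha hb
  refine (ordinaryHypergeometricSeries_radius_eq_one ℂ a b c fun k ↦ ?_).ge
  simp only [ne_eq, eq_comm (a := (k : ℂ)), neg_eq_iff_eq_neg]
  exact ⟨ha k, hb k, hc k⟩

variable {c w : ℂ}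

lemma hyp2F1_hasFPowerSeriesOnBall (a b : ℂ) (hc : ∀ m : ℕ, c ≠ -(m : ℂ)) :
    HasFPowerSeriesOnBall (hyp2F1 a b c) (ordinaryHypergeometricSeries ℂ a b c) 0 1 := by
  have hr := one_le_radius_ordinaryHypergeometricSeries a b hc
  refine ((FormalMultilinearSeries.hasFPowerSeriesOnBall _ (one_pos.trans_le hr)).mono
    one_pos hr).congr fun w _ ↦ ?_
  exact tsum_congr fun n ↦ ordinaryHypergeometricSeries_apply_eq_hypCoeff a b c w n

lemma summable_hypCoeff_mul_pow (a b : ℂ) (hc : ∀ m : ℕ, c ≠ -(m : ℂ)) (hw : ‖w‖ < 1) :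
    Summable fun n ↦ hypCoeff a b c n * w ^ n := by
  have h := (hyp2F1_hasFPowerSeriesOnBall a b hc).hasSum (y := w) (by
    simpa [← ofReal_norm] using hw)
  exact h.summable.congr fun n ↦ ordinaryHypergeometricSeries_apply_eq_hypCoeff a b c w n

lemma hyp2F1_analyticAt (a b : ℂ) (hc : ∀ m : ℕ, c ≠ -(m : ℂ)) (hw : ‖w‖ < 1) :
    AnalyticAt ℂ (hyp2F1 a b c) w :=
  (hyp2F1_hasFPowerSeriesOnBall a b hc).analyticAt_of_mem (by simpa [← ofReal_norm] using hw)

end Hypergeometric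

section QuadraticTransformation

variable {a b c w : ℂ}

lemma four_pow_mul_hypCoeff_mul_multichoose (a : ℂ) (hc : ∀ m : ℕ, c ≠ -(m : ℂ)) (i j : ℕ) :
    4 ^ i * hypCoeff (a / 2) ((a + 1) / 2) c i *
        ((-1) ^ j * Ring.multichoose (a + 2 * i) j) =
      poch a (i + j) / poch c (i + j) * (Ring.multichoose (a + (i + j : ℕ)) i *
        Ring.multichoose (1 - c - (i + j : ℕ)) j) := by
  have hi : (i.factorial : ℂ) ≠ 0 := mod_cast i.factorial_ne_zero
  have hj : (j.factorial : ℂ) ≠ 0 := mod_cast j.factorial_ne_zero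
  have hci := poch_ne_zero hc i
  have hcij := poch_ne_zero hc (i + j)
  have numerator : poch a (2 * i) * poch (a + 2 * i) j =
      poch a (i + j) * poch (a + (i + j : ℕ)) i := by
    rw [← poch_add, show i + j + i = 2 * i + j by ring, poch_add a (2 * i)]
    push_cast
    rfl
  have denominator : poch c i * ((-1) ^ j * poch (1 - c - (i + j : ℕ)) j) =
      poch c (i + j) := by
    rw [poch_add, show 1 - c - ((i + j : ℕ) : ℂ) = 1 - (c + i) - j by push_cast; ring,
      poch_one_sub_sub, ← mul_assoc ((-1) ^ j), ← mul_pow]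
    simp
  have hsign : ((-1 : ℂ) ^ j) ^ 2 = 1 := by rw [← pow_mul, mul_comm, pow_mul]; simp
  rw [poch_two_mul] at numerator
  rw [hypCoeff]
  simp only [multichoose_eq_poch_div]
  field_simp
  linear_combination (-1) ^ j * poch c (i + j) * numerator -
    poch a (i + j) * poch (a + (i + j : ℕ)) i * (-1) ^ j * denominator +
    poch c i * poch a (i + j) * poch (a + (i + j : ℕ)) i * poch (1 - c - (i + j : ℕ)) j * hsign

lemma sum_antidiagonal_hypCoeff_mul_multichoose (hc : ∀ m : ℕ, a - b + 1 ≠ -(m : ℂ)) (N : ℕ) :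
    ∑ p ∈ antidiagonal N, 4 ^ p.1 * hypCoeff (a / 2) ((a + 1) / 2) (a - b + 1) p.1 *
      ((-1) ^ p.2 * Ring.multichoose (a + 2 * p.1) p.2) = hypCoeff a b (a - b + 1) N := by
  set c := a - b + 1 with hc_def
  -- Chu–Vandermonde: the upper parameter `b` is the sum of the two parameters met on a diagonal.
  have hb : b = (a + N) + (1 - c - N) := by rw [hc_def]; ring
  calc
    _ = ∑ p ∈ antidiagonal N, poch a N / poch c N *
          (Ring.multichoose (a + N) p.1 * Ring.multichoose (1 - c - N) p.2) := by
      refine sum_congr rfl fun p hp ↦ ?_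
      rw [four_pow_mul_hypCoeff_mul_multichoose a hc, mem_antidiagonal.mp hp]
    _ = poch a N / poch c N * Ring.multichoose b N := by
      rw [← mul_sum, ← add_multichoose_eq, ← hb]
    _ = hypCoeff a b c N := by
      rw [hypCoeff, multichoose_eq_poch_div, div_mul_div_comm]

/-- The `(i, j)`-th term of the double series which arises from the right-hand side of the
quadratic transformation when each power of `1 + w` is expanded by the binomial theorem. -/
noncomputable def quadTerm (a c w : ℂ) (p : ℕ × ℕ) : ℂ :=
  hypCoeff (a / 2) ((a + 1) / 2) c p.1 * (4 * w) ^ p.1 *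
    (Ring.multichoose (a + 2 * p.1) p.2 * (-w) ^ p.2)

lemma one_add_ne_zero_of_norm_lt_one (hw : ‖w‖ < 1) : 1 + w ≠ 0 :=
  slitPlane_ne_zero (mem_slitPlane_of_norm_lt_one hw)

lemma hasSum_quadTerm_row (a c : ℂ) (hw : ‖w‖ < 1) (i : ℕ) :
    HasSum (fun j ↦ quadTerm a c w (i, j))
      (1 / (1 + w) ^ a * (hypCoeff (a / 2) ((a + 1) / 2) c i * (4 * w / (1 + w) ^ 2) ^ i)) := by
  convert! (hasSum_multichoose_mul_pow (a + 2 * i) (x := -w) (by rwa [norm_neg])).mul_left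
    (hypCoeff (a / 2) ((a + 1) / 2) c i * (4 * w) ^ i) using 1
  have hpow : (1 + w) ^ (2 * (i : ℂ)) = ((1 + w) ^ 2) ^ i := by
    rw [← pow_mul, ← cpow_natCast]
    push_cast
    rfl
  rw [sub_neg_eq_add, cpow_add _ _ (one_add_ne_zero_of_norm_lt_one hw), hpow, div_pow]
  ring

lemma summable_quadTerm (a : ℂ) (hc : ∀ m : ℕ, c ≠ -(m : ℂ)) (hw : ‖w‖ < 1)
    (hw4 : 4 * ‖w‖ < (1 - ‖w‖) ^ 2) : Summable (quadTerm a c w) := by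
  have h1w : 0 < 1 - ‖w‖ := sub_pos.mpr hw
  have hy : ‖((4 * ‖w‖ / (1 - ‖w‖) ^ 2 : ℝ) : ℂ)‖ < 1 := by
    rw [norm_real, Real.norm_of_nonneg (by positivity)]
    exact (div_lt_one (by positivity)).mpr hw4
  refine Summable.of_norm ((summable_prod_of_nonneg fun _ ↦ norm_nonneg _).mpr
    ⟨fun i ↦ (hasSum_quadTerm_row a c hw i).summable.norm, ?_⟩)
  refine Summable.of_nonneg_of_le (fun i ↦ tsum_nonneg fun _ ↦ norm_nonneg _) (fun i ↦ ?_)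
    ((summable_hypCoeff_mul_pow (a / 2) ((a + 1) / 2) hc hy).norm.mul_left (1 / (1 - ‖w‖) ^ ‖a‖))
  have ha : ‖a + 2 * i‖ ≤ ‖a‖ + 2 * i := (norm_add_le _ _).trans_eq (by simp)
  have hpow : (1 - ‖w‖) ^ (2 * (i : ℝ)) = ((1 - ‖w‖) ^ 2) ^ i := by
    rw [← pow_mul, ← Real.rpow_natCast]
    push_cast
    rfl
  calc ∑' j, ‖quadTerm a c w (i, j)‖
      = ‖hypCoeff (a / 2) ((a + 1) / 2) c i‖ * (4 * ‖w‖) ^ i *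
          ∑' j, ‖Ring.multichoose (a + 2 * i) j * (-w) ^ j‖ := by
        simp only [quadTerm, norm_mul _ (_ * _), tsum_mul_left]
        simp
    _ ≤ ‖hypCoeff (a / 2) ((a + 1) / 2) c i‖ * (4 * ‖w‖) ^ i *
          (1 / (1 - ‖w‖) ^ (‖a‖ + 2 * i)) := by
        gcongr
        simpa using tsum_norm_multichoose_mul_pow_le ha (x := -w) (by rwa [norm_neg])
    _ = 1 / (1 - ‖w‖) ^ ‖a‖ * ‖hypCoeff (a / 2) ((a + 1) / 2) c i *
          ((4 * ‖w‖ / (1 - ‖w‖) ^ 2 : ℝ) : ℂ) ^ i‖ := by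
        rw [Real.rpow_add h1w, hpow, norm_mul, norm_pow, norm_real,
          Real.norm_of_nonneg (by positivity), div_pow]
        ring

lemma tsum_prod_eq_tsum_sum_antidiagonal {E A : Type*} [NormedAddCommGroup E] [CompleteSpace E]
    [AddCommMonoid A] [HasAntidiagonal A] {f : A × A → E} (hf : Summable f) :
    ∑' p, f p = ∑' n, ∑ p ∈ antidiagonal n, f p := by
  simp_rw [← sum_finset_coe f, ← tsum_fintype (L := .unconditional _)]
  rw [← HasAntidiagonal.sigmaAntidiagonalEquivProd.tsum_eq f]
  exact (HasAntidiagonal.sigmaAntidiagonalEquivProd.summable_iff.mpr hf).tsum_sigma'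
    fun n ↦ (hasSum_fintype _).summable

lemma sum_antidiagonal_quadTerm (hc : ∀ m : ℕ, a - b + 1 ≠ -(m : ℂ)) (w : ℂ) (N : ℕ) :
    ∑ p ∈ antidiagonal N, quadTerm a (a - b + 1) w p = hypCoeff a b (a - b + 1) N * w ^ N := by
  rw [← sum_antidiagonal_hypCoeff_mul_multichoose hc, sum_mul]
  refine sum_congr rfl fun p hp ↦ ?_
  rw [quadTerm, ← mem_antidiagonal.mp hp, pow_add, mul_pow, neg_pow w]
  ring

lemma hyp2F1_quadratic_of_summable (hc : ∀ m : ℕ, a - b + 1 ≠ -(m : ℂ)) (hw : ‖w‖ < 1)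
    (hs : Summable (quadTerm a (a - b + 1) w)) :
    hyp2F1 a b (a - b + 1) w = 1 / (1 + w) ^ a *
      hyp2F1 (a / 2) ((a + 1) / 2) (a - b + 1) (4 * w / (1 + w) ^ 2) := by
  calc hyp2F1 a b (a - b + 1) w
      = ∑' N, ∑ p ∈ antidiagonal N, quadTerm a (a - b + 1) w p :=
        tsum_congr fun N ↦ (sum_antidiagonal_quadTerm hc w N).symm
    _ = ∑' i, ∑' j, quadTerm a (a - b + 1) w (i, j) := by
        rw [← tsum_prod_eq_tsum_sum_antidiagonal hs, hs.tsum_prod]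
    _ = _ := by
        rw [hyp2F1_eq_tsum, ← tsum_mul_left]
        exact tsum_congr fun i ↦ (hasSum_quadTerm_row a _ hw i).tsum_eq

/-- The domain of the quadratic transformation: the component containing `0` of the region where
its right-hand side is given by the convergent series. -/
def quadDomain : Set ℂ := {w | ‖w‖ < 1 ∧ 4 * ‖w‖ < ‖1 + w‖ ^ 2}

lemma norm_four_mul_div_lt_one (hw : w ∈ quadDomain) : ‖4 * w / (1 + w) ^ 2‖ < 1 := by
  have h1w := norm_pos_iff.mpr (one_add_ne_zero_of_norm_lt_one hw.1)
  rw [norm_div, norm_mul, norm_pow, Complex.norm_ofNat]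
  exact (div_lt_one (by positivity)).mpr hw.2

lemma zero_mem_quadDomain : (0 : ℂ) ∈ quadDomain := by simp [quadDomain]

lemma starConvex_quadDomain : StarConvex ℝ 0 quadDomain := by
  rw [starConvex_zero_iff]
  rintro w ⟨hw1, hw4⟩ t ht0 ht1
  have hnorm : ‖t • w‖ = t * ‖w‖ := by rw [norm_smul, Real.norm_of_nonneg ht0]
  have hsq (z : ℂ) : ‖1 + z‖ ^ 2 = 1 + 2 * z.re + ‖z‖ ^ 2 := by
    rw [← normSq_eq_norm_sq, ← normSq_eq_norm_sq, normSq_add]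
    simp
    ring
  rw [hsq] at hw4
  refine ⟨by rw [hnorm]; exact mul_lt_one_of_nonneg_of_lt_one_right ht1 (norm_nonneg w) hw1, ?_⟩
  rw [hsq, hnorm, smul_re, smul_eq_mul]
  have hw2 : ‖w‖ ^ 2 < 1 := pow_lt_one₀ (norm_nonneg w) hw1 two_ne_zero
  have hconcave : 0 ≤ (1 - t) * (1 - t * ‖w‖ ^ 2) :=
    mul_nonneg (sub_nonneg.mpr ht1) (by nlinarith [sq_nonneg ‖w‖])
  rcases ht0.eq_or_lt with rfl | ht
  · simp
  · nlinarith [mul_lt_mul_of_pos_left hw4 ht]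

lemma analyticOnNhd_quadratic_rhs (a α β : ℂ) (hc : ∀ m : ℕ, c ≠ -(m : ℂ)) :
    AnalyticOnNhd ℂ (fun w ↦ 1 / (1 + w) ^ a * hyp2F1 α β c (4 * w / (1 + w) ^ 2))
      quadDomain := by
  intro w hw
  have h1w := one_add_ne_zero_of_norm_lt_one hw.1
  have hpow : AnalyticAt ℂ (fun w ↦ (1 + w) ^ a) w :=
    (analyticAt_const.add analyticAt_id).cpow analyticAt_const (mem_slitPlane_of_norm_lt_one hw.1)
  have harg : AnalyticAt ℂ (fun w : ℂ ↦ 4 * w / (1 + w) ^ 2) w := by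
    have := pow_ne_zero 2 h1w
    fun_prop (disch := assumption)
  exact (analyticAt_const.div hpow (by simp [cpow_eq_zero_iff, h1w])).mul
    ((hyp2F1_analyticAt _ _ hc (norm_four_mul_div_lt_one hw)).comp
      (f := fun w ↦ 4 * w / (1 + w) ^ 2) harg)

theorem hyp2F1_quadratic (hc : ∀ m : ℕ, a - b + 1 ≠ -(m : ℂ)) (hw : w ∈ quadDomain) :
    hyp2F1 a b (a - b + 1) w = 1 / (1 + w) ^ a *
      hyp2F1 (a / 2) ((a + 1) / 2) (a - b + 1) (4 * w / (1 + w) ^ 2) := by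
  have hlhs : AnalyticOnNhd ℂ (hyp2F1 a b (a - b + 1)) quadDomain :=
    fun z hz ↦ hyp2F1_analyticAt a b hc hz.1
  have hrhs := analyticOnNhd_quadratic_rhs a (a / 2) ((a + 1) / 2) hc
  have hconn : IsPreconnected quadDomain :=
    (starConvex_quadDomain.isPathConnected zero_mem_quadDomain).isConnected.isPreconnected
  have hnear : ∀ᶠ z : ℂ in 𝓝 0, ‖z‖ < 1 ∧ 4 * ‖z‖ < (1 - ‖z‖) ^ 2 :=
    (ContinuousAt.eventually_lt (by fun_prop) (by fun_prop) (by simp)).and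
      (ContinuousAt.eventually_lt (by fun_prop) (by fun_prop) (by simp))
  refine hlhs.eqOn_of_preconnected_of_eventuallyEq hrhs hconn zero_mem_quadDomain ?_ hw
  filter_upwards [hnear] with z hz
  exact hyp2F1_quadratic_of_summable hc hz.1 (summable_quadTerm a hc hz.1 hz.2)

end QuadraticTransformation

section RightHalfPlane

variable {x y ρ : ℂ}

lemma mul_cpow_of_re_pos (hx : 0 < x.re) (hy : 0 < y.re) (s : ℂ) :
    (x * y) ^ s = x ^ s * y ^ s := by
  have hx0 := ne_zero_of_re_pos hx
  have hy0 := ne_zero_of_re_pos hy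
  have hxarg := abs_lt.mp (abs_arg_lt_pi_div_two_iff.mpr (.inl hx))
  have hyarg := abs_lt.mp (abs_arg_lt_pi_div_two_iff.mpr (.inl hy))
  have hlog : log (x * y) = log x + log y :=
    log_mul hx0 hy0 ⟨by linarith, by linarith⟩
  rw [cpow_def_of_ne_zero (mul_ne_zero hx0 hy0), cpow_def_of_ne_zero hx0,
    cpow_def_of_ne_zero hy0, hlog, add_mul, exp_add]

lemma sq_cpow_div_two_of_re_pos (hx : 0 < x.re) (s : ℂ) : (x ^ 2) ^ (s / 2) = x ^ s := by
  have hxarg := abs_lt.mp (abs_arg_lt_pi_div_two_iff.mpr (.inl hx))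
  rw [← cpow_ofNat_mul' (by linarith) (by linarith)]
  congr 1
  ring

lemma div_two_mul_cpow_of_re_pos (hρ : 0 < ρ.re) (hx : 0 < (x / (2 * ρ)).re) (s : ℂ) :
    (x / (2 * ρ)) ^ s = x ^ s / (2 ^ s * ρ ^ s) := by
  have hρ0 := ne_zero_of_re_pos hρ
  have h2ρ : (2 * ρ) ^ s = 2 ^ s * ρ ^ s := mul_cpow_of_re_pos (by simp) hρ s
  rw [← h2ρ, eq_div_iff (by simp [cpow_eq_zero_iff, hρ0]),
    ← mul_cpow_of_re_pos hx (by simpa using hρ), div_mul_cancel₀ x (by simp [hρ0])]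

lemma re_lt_re_inv (hρ : 0 < ρ.re) (hρ1 : ‖ρ‖ < 1) : ρ.re < ρ⁻¹.re := by
  have hnorm : 0 < ‖ρ‖ := norm_pos_iff.mpr (ne_zero_of_re_pos hρ)
  rw [inv_re, normSq_eq_norm_sq, lt_div_iff₀ (by positivity)]
  exact mul_lt_of_lt_one_right hρ (pow_lt_one₀ hnorm.le hρ1 two_ne_zero)

lemma re_one_add_sq_div_pos (hρ : 0 < ρ.re) : 0 < ((1 + ρ ^ 2) / (2 * ρ)).re := by
  have hρ0 := ne_zero_of_re_pos hρ
  have hinv : 0 < ρ⁻¹.re := by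
    rw [inv_re]
    exact div_pos hρ (normSq_pos.mpr hρ0)
  have heq : (1 + ρ ^ 2) / (2 * ρ) = (ρ⁻¹ + ρ) / (2 : ℝ) := by
    push_cast
    field_simp
  rw [heq, div_ofReal_re, add_re]
  positivity

lemma re_one_sub_sq_div_pos (hρ : 0 < ρ.re) (hρ1 : ‖ρ‖ < 1) :
    0 < ((1 - ρ ^ 2) / (2 * ρ)).re := by
  have hρ0 := ne_zero_of_re_pos hρ
  have heq : (1 - ρ ^ 2) / (2 * ρ) = (ρ⁻¹ - ρ) / (2 : ℝ) := by
    push_cast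
    field_simp
  rw [heq, div_ofReal_re, sub_re]
  exact div_pos (sub_pos.mpr (re_lt_re_inv hρ hρ1)) two_pos

end RightHalfPlane

section LegendreQ

variable {a b ρ : ℂ}

lemma norm_two_mul_ofReal_lt {r : ℝ} (hr : |r| ≠ 1) : ‖2 * (r : ℂ)‖ < ‖1 + (r : ℂ) ^ 2‖ := by
  norm_cast
  rw [norm_mul, Real.norm_ofNat, Real.norm_eq_abs, Real.norm_of_nonneg (by positivity), ← sq_abs]
  nlinarith [sq_pos_of_ne_zero (sub_ne_zero.mpr hr)]

lemma legendreQ_one_add_sq_div (a b : ℂ) (hρ : 0 < ρ.re) (hρ1 : ‖ρ‖ < 1) :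
    legendreQ (a - b - 1 / 2) (b - 1 / 2) ((1 + ρ ^ 2) / (2 * ρ)) =
      Real.sqrt Real.pi * exp (Real.pi * I * (b - 1 / 2)) * Gamma a * ρ ^ (a - b + 1 / 2) *
          (1 - ρ ^ 2) ^ (b - 1 / 2) / Gamma (a - b + 1) *
        (1 / (1 + ρ ^ 2) ^ a *
          hyp2F1 (a / 2) ((a + 1) / 2) (a - b + 1) (4 * ρ ^ 2 / (1 + ρ ^ 2) ^ 2)) := by
  have hρ0 := ne_zero_of_re_pos hρ
  have hz : 1 / ((1 + ρ ^ 2) / (2 * ρ)) ^ 2 = 4 * ρ ^ 2 / (1 + ρ ^ 2) ^ 2 := by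
    rw [div_pow, one_div_div]
    ring
  have hz_sub : ((1 + ρ ^ 2) / (2 * ρ)) ^ 2 - 1 = ((1 - ρ ^ 2) / (2 * ρ)) ^ 2 := by
    field_simp
    ring
  have h2 : (2 : ℂ) ^ a = 2 ^ (b - 1 / 2) * 2 ^ (a - b + 1 / 2) := by
    rw [← cpow_add _ _ two_ne_zero]
    ring_nf
  have hρa : ρ ^ a = ρ ^ (b - 1 / 2) * ρ ^ (a - b + 1 / 2) := by
    rw [← cpow_add _ _ hρ0]
    ring_nf
  have h2_ne (s : ℂ) : (2 : ℂ) ^ s ≠ 0 := by simp [cpow_eq_zero_iff]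
  have hρ_ne (s : ℂ) : ρ ^ s ≠ 0 := by simp [cpow_eq_zero_iff, hρ0]
  rw [legendreQ, hyp2F1_comm, hz, hz_sub,
    sq_cpow_div_two_of_re_pos (re_one_sub_sq_div_pos hρ hρ1),
    div_two_mul_cpow_of_re_pos hρ (re_one_sub_sq_div_pos hρ hρ1),
    div_two_mul_cpow_of_re_pos hρ (re_one_add_sq_div_pos hρ),
    show a - b - 1 / 2 + (b - 1 / 2) + 1 = a by ring,
    show a - b - 1 / 2 + (b - 1 / 2) + 2 = a + 1 by ring,
    show a - b - 1 / 2 + 3 / 2 = a - b + 1 by ring,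
    show a - b - 1 / 2 + 1 = a - b + 1 / 2 by ring, h2, hρa]
  field_simp [h2_ne, hρ_ne]

theorem hyp2F1_eq_legendreQ_general (ha : ∀ m : ℕ, a ≠ -(m : ℂ))
    (hc : ∀ m : ℕ, a - b + 1 ≠ -(m : ℂ)) (hρ : 0 < ρ.re) (hρ1 : ‖ρ‖ < 1)
    (hz : ‖2 * ρ‖ < ‖1 + ρ ^ 2‖) :
    hyp2F1 a b (a - b + 1) (ρ ^ 2) =
      Gamma (a - b + 1) * exp (Real.pi * I * (1 / 2 - b)) /
          (Real.sqrt Real.pi * Gamma a * ρ ^ (a - b + 1 / 2) * (1 - ρ ^ 2) ^ (b - 1 / 2)) *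
        legendreQ (a - b - 1 / 2) (b - 1 / 2) ((1 + ρ ^ 2) / (2 * ρ)) := by
  have hmem : ρ ^ 2 ∈ quadDomain := by
    refine ⟨by simpa using pow_lt_one₀ (norm_nonneg ρ) hρ1 two_ne_zero, ?_⟩
    calc 4 * ‖ρ ^ 2‖ = ‖2 * ρ‖ ^ 2 := by
          rw [norm_mul, norm_pow, mul_pow, Complex.norm_ofNat]
          norm_num
      _ < ‖1 + ρ ^ 2‖ ^ 2 := pow_lt_pow_left₀ hz (norm_nonneg _) two_ne_zero
  have hexp : exp (Real.pi * I * (1 / 2 - b)) = (exp (Real.pi * I * (b - 1 / 2)))⁻¹ := by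
    rw [← exp_neg, ← mul_neg, neg_sub]
  have hΓa : Gamma a ≠ 0 := Gamma_ne_zero ha
  have hΓc : Gamma (a - b + 1) ≠ 0 := Gamma_ne_zero hc
  have hπ : (Real.sqrt Real.pi : ℂ) ≠ 0 := mod_cast (Real.sqrt_pos.mpr Real.pi_pos).ne'
  have hρ_ne (s : ℂ) : ρ ^ s ≠ 0 := by simp [cpow_eq_zero_iff, ne_zero_of_re_pos hρ]
  have h1ρ : 1 - ρ ^ 2 ≠ 0 := by
    intro h
    simpa [h] using re_one_sub_sq_div_pos hρ hρ1
  have h1ρ_ne (s : ℂ) : (1 - ρ ^ 2) ^ s ≠ 0 := by simp [cpow_eq_zero_iff, h1ρ]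
  rw [legendreQ_one_add_sq_div a b hρ hρ1, ← hyp2F1_quadratic hc hmem, hexp]
  field_simp [hρ_ne, h1ρ_ne]

end LegendreQ

/-- evaluation of the Gauss hypergeometric coefficient in terms of the
associated Legendre function of the second kind. -/
theorem hyp2F1_eq_legendreQ
    (ν : ℂ) (hν : ∀ m : ℕ, ν ≠ -(m : ℂ))
    (μ : ℂ) (k : ℕ)
    (hνk : ∀ m : ℕ, ν + (k : ℂ) ≠ -(m : ℂ))
    (hμk : ∀ m : ℕ, μ + (k : ℂ) + 1 ≠ -(m : ℂ))
    (ρ : ℝ) (hρ0 : 0 < ρ) (hρ1 : ρ < 1) :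
    hyp2F1 (ν + (k : ℂ)) (ν - μ) (μ + (k : ℂ) + 1) ((ρ : ℂ) ^ 2) =
      Complex.Gamma (μ + (k : ℂ) + 1) * Complex.exp (Real.pi * I * (μ - ν + 1 / 2)) /
          ((Real.sqrt Real.pi : ℂ) * Complex.Gamma (ν + (k : ℂ)) *
            (ρ : ℂ) ^ (μ + (k : ℂ) + 1 / 2) * (1 - (ρ : ℂ) ^ 2) ^ (ν - μ - 1 / 2)) *
        legendreQ ((k : ℂ) + μ - 1 / 2) (ν - μ - 1 / 2) ((1 + (ρ : ℂ) ^ 2) / (2 * (ρ : ℂ))) := by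
  have hc : ν + k - (ν - μ) + 1 = μ + k + 1 := by ring
  convert! hyp2F1_eq_legendreQ_general (b := ν - μ) hνk (by rwa [hc]) (ρ := ρ) (by simpa)
    (by simpa [abs_of_pos hρ0]) (norm_two_mul_ofReal_lt (by rw [abs_of_pos hρ0]; exact hρ1.ne))
    using 3 <;> ring_nf
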